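/- arXiv:1205.6887 — 5 statements merged into one kernel-verified Lean document; each statement's English description precedes it below -/
import Mathlib

section
/- Let L > 0, R > 0, and let i be a positive integer. Define u : ℝ × ℝ → ℝ by u(z,r) = sin(iπz/L)·cosh(iπr/L), and set μ_i = L/(iπ·tanh(iπR/L)). Then: (1) u is harmonic, i.e. ∂²u/∂z²(z,r) + ∂²u/∂r²(z,r) = 0 for all (z,r); (2) u(0,r) = u(L,r) = 0 for all r; (3) ∂u/∂r(z,0) = 0 for all z; and (4) on the line r = R one has u(z,R) = μ_i·(∂u/∂r)(z,R) for all z. -/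
open Real

/-- The explicit eigenfunctions
`u(z,r) = sin(iπz/L)·cosh(iπr/L)` of the added-mass (Neumann-to-Dirichlet)
operator: `u` is harmonic, vanishes on the inlet/outlet boundaries
`z = 0` and `z = L`, has vanishing normal derivative on the bottom boundary
`r = 0`, and on the lateral boundary `r = R` satisfies
`u = μ_i · ∂u/∂r` with `μ_i = L/(iπ·tanh(iπR/L))`. -/
theorem added_mass_eigenfunctions
    (L R : ℝ) (hL : 0 < L) (hR : 0 < R) (i : ℕ) (hi : 0 < i)
    (u : ℝ → ℝ → ℝ)
    (hu : ∀ z r, u z r = Real.sin (i * π * z / L) * Real.cosh (i * π * r / L))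
    (μ : ℝ) (hμ : μ = L / (i * π * Real.tanh (i * π * R / L))) :
    (∀ z r, deriv (fun z' => deriv (fun z'' => u z'' r) z') z
        + deriv (fun r' => deriv (fun r'' => u z r'') r') r = 0)
    ∧ (∀ r, u 0 r = 0 ∧ u L r = 0)
    ∧ (∀ z, deriv (fun r => u z r) 0 = 0)
    ∧ (∀ z, u z R = μ * deriv (fun r => u z r) R) := by
  have hcL : (i * π / L : ℝ) * L = i * π := div_mul_cancel₀ _ hL.ne'
  have hc : (0 : ℝ) < i * π / L := by positivity
  have hμc : μ = 1 / (i * π / L * Real.tanh (i * π / L * R)) := by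
    rw [hμ, mul_div_right_comm, ← hcL, mul_div_cancel_right₀ _ hL.ne',
      mul_right_comm, div_mul_cancel_right₀ hL.ne', one_div]
  simp only [mul_div_right_comm (i * π : ℝ)] at hu
  generalize (i * π / L : ℝ) = c at *
  have hlin (x : ℝ) : HasDerivAt (fun y => c * y) c x := hasDerivAt_const_mul c
  have hsin (x : ℝ) : HasDerivAt (fun y => Real.sin (c * y)) (Real.cos (c * x) * c) x :=
    (hlin x).sin
  have hcos (x : ℝ) : HasDerivAt (fun y => Real.cos (c * y)) (-Real.sin (c * x) * c) x :=
    (hlin x).cos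
  have hcosh (x : ℝ) : HasDerivAt (fun y => Real.cosh (c * y)) (Real.sinh (c * x) * c) x :=
    (hlin x).cosh
  have hsinh (x : ℝ) : HasDerivAt (fun y => Real.sinh (c * y)) (Real.cosh (c * x) * c) x :=
    (hlin x).sinh
  have hz (z r : ℝ) :
      deriv (fun z' => u z' r) z = Real.cos (c * z) * c * Real.cosh (c * r) := by
    simp only [hu]
    exact ((hsin z).mul_const _).deriv
  have hr (z r : ℝ) :
      deriv (fun r' => u z r') r = Real.sin (c * z) * (Real.sinh (c * r) * c) := by
    simp only [hu]
    exact ((hcosh r).const_mul _).deriv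
  refine ⟨fun z r => ?_, fun r => ⟨?_, ?_⟩, fun z => ?_, fun z => ?_⟩
  · simp only [hz, hr]
    rw [(((hcos z).mul_const c).mul_const _).deriv, (((hsinh r).mul_const c).const_mul _).deriv]
    ring
  · simp [hu]
  · rw [hu, hcL, Real.sin_nat_mul_pi, zero_mul]
  · simp [hr]
  · have hs : Real.sinh (c * R) ≠ 0 := (Real.sinh_pos_iff.2 (mul_pos hc hR)).ne'
    have hch : Real.cosh (c * R) ≠ 0 := (Real.cosh_pos _).ne'
    have hc0 : c ≠ 0 := hc.ne'
    rw [hr, hu, hμc, Real.tanh_eq_sinh_div_cosh]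
    field_simp
end

section
/- Let L > 0, R > 0, κ > 0, and let i be a positive integer. Define u : ℝ × ℝ → ℝ by u(z,r) = sin(iπz/L)·cosh(iπr/L), set μ_i = L/(iπ·tanh(iπR/L)) and λ_i = μ_i/(μ_i + κ). Then on the line r = R one has, for all z, u(z,R) = λ_i·( u(z,R) + κ·(∂u/∂r)(z,R) ). -/
open Real

/-- The functions `u(z,r) = sin(iπz/L)·cosh(iπr/L)` are
eigenfunctions of the Robin-to-Dirichlet operator `S` of the kinematically
coupled β-scheme: on the lateral boundary `r = R` one has
`u(z,R) = λ_i·(u(z,R) + κ·∂u/∂r(z,R))`, where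
`μ_i = L/(iπ·tanh(iπR/L))` and `λ_i = μ_i/(μ_i + κ)`. -/
theorem robin_to_dirichlet_eigenfunctions
    (L R κ : ℝ) (hL : 0 < L) (hR : 0 < R) (hκ : 0 < κ)
    (i : ℕ) (hi : 0 < i)
    (u : ℝ → ℝ → ℝ)
    (hu : ∀ z r, u z r = Real.sin (i * π * z / L) * Real.cosh (i * π * r / L))
    (μ : ℝ) (hμ : μ = L / (i * π * Real.tanh (i * π * R / L)))
    (lam : ℝ) (hlam : lam = μ / (μ + κ)) :
    ∀ z, u z R = lam * (u z R + κ * deriv (fun r => u z r) R) := by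
  intro z
  have hi' : (0 : ℝ) < i := Nat.cast_pos.mpr hi
  have hS : 0 < Real.sinh (i * π * R / L) := Real.sinh_pos_iff.mpr (by positivity)
  have hC : 0 < Real.cosh (i * π * R / L) := Real.cosh_pos _
  have hderiv : deriv (fun r => u z r) R =
      Real.sin (i * π * z / L) * (Real.sinh (i * π * R / L) * (i * π / L)) := by
    have hlin : HasDerivAt (fun r : ℝ => i * π * r / L) (i * π / L) R := by
      simpa using ((hasDerivAt_id R).const_mul (i * π : ℝ)).div_const L
    simp only [hu]
    exact (hlin.cosh.const_mul _).deriv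
  have hμ_pos : 0 < μ := by
    rw [hμ, Real.tanh_eq_sinh_div_cosh]
    positivity
  have hμ_sinh : μ * (Real.sinh (i * π * R / L) * (i * π / L)) =
      Real.cosh (i * π * R / L) := by
    rw [hμ, Real.tanh_eq_sinh_div_cosh]
    generalize Real.sinh (i * π * R / L) = S at *
    generalize Real.cosh (i * π * R / L) = C at *
    field_simp
  rw [hderiv, hu, hlam, div_mul_eq_mul_div, eq_div_iff (by positivity)]
  linear_combination (-κ * Real.sin (i * π * z / L)) * hμ_sinh
end

section
/- Let κ > 0, μ > 0, and β ∈ [0,1], and set λ = μ/(μ + κ). Then 0 ≤ βλ < 1. Moreover, for every M ≥ 0, every real sequence (a_n)_{n≥1} with |a_n| ≤ M for all n, and every p_0 ∈ ℝ, the sequence defined by p_{n+1} = a_{n+1} + βλ·p_n satisfies |β·p_n| ≤ β·( M/(1 − βλ) + |p_0| ) for every n ≥ 0. In particular the structure loading β·p_n in the kinematically coupled β-scheme is uniformly bounded for every value of κ = ρ_s h/ρ_f > 0, i.e. the scheme does not suffer from the added-mass effect and is unconditionally stable for all 0 ≤ β ≤ 1. -/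
/-- A contractive affine recursion with bounded forcing stays bounded. -/
theorem abs_le_of_affine_recursion {r M : ℝ} (hr0 : 0 ≤ r) (hr1 : r < 1) (hM : 0 ≤ M)
    {a p : ℕ → ℝ} (ha : ∀ n : ℕ, 1 ≤ n → |a n| ≤ M)
    (hp : ∀ n : ℕ, p (n + 1) = a (n + 1) + r * p n) (n : ℕ) :
    |p n| ≤ M / (1 - r) + |p 0| := by
  have h1r : 0 < 1 - r := sub_pos.mpr hr1
  induction n with
  | zero => exact le_add_of_nonneg_left (div_nonneg hM h1r.le)
  | succ n ih =>
    have hC : M / (1 - r) * (1 - r) = M := div_mul_cancel₀ M h1r.ne'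
    calc |p (n + 1)| ≤ |a (n + 1)| + |r * p n| := by rw [hp]; exact abs_add_le _ _
      _ = |a (n + 1)| + r * |p n| := by rw [abs_mul, abs_of_nonneg hr0]
      _ ≤ M + r * (M / (1 - r) + |p 0|) := by gcongr; exact ha _ n.succ_pos
      _ ≤ M / (1 - r) + |p 0| := by nlinarith [mul_nonneg h1r.le (abs_nonneg (p 0))]

/-- Unconditional stability of the kinematically coupled
β-scheme (eigenmode form). For `κ = ρ_s h/ρ_f > 0`, any added-mass
eigenvalue `μ > 0`, any `β ∈ [0,1]`, and `λ = μ/(μ + κ)`, one has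
`0 ≤ βλ < 1`; and for any uniformly bounded external pressure data
(`|a_n| ≤ M`), the pressure iteration `p_{n+1} = a_{n+1} + βλ·p_n`
produces a structure loading `β·p_n` that is uniformly bounded,
for every value of `κ`: no added-mass effect. -/
theorem kinematically_coupled_beta_scheme_stable
    (κ μ β : ℝ) (hκ : 0 < κ) (hμ : 0 < μ) (hβ : β ∈ Set.Icc (0 : ℝ) 1)
    (lam : ℝ) (hlam : lam = μ / (μ + κ)) :
    (0 ≤ β * lam ∧ β * lam < 1)
    ∧ ∀ M : ℝ, 0 ≤ M → ∀ a : ℕ → ℝ, (∀ n : ℕ, 1 ≤ n → |a n| ≤ M) →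
        ∀ p : ℕ → ℝ, (∀ n : ℕ, p (n + 1) = a (n + 1) + β * lam * p n) →
          ∀ n : ℕ, |β * p n| ≤ β * (M / (1 - β * lam) + |p 0|) := by
  obtain ⟨hβ0, hβ1⟩ := hβ
  have hsum : 0 < μ + κ := add_pos hμ hκ
  have hlam0 : 0 ≤ lam := hlam ▸ (div_pos hμ hsum).le
  have hlam1 : lam < 1 := by rw [hlam, div_lt_one hsum]; linarith
  have hr0 : 0 ≤ β * lam := mul_nonneg hβ0 hlam0
  have hr1 : β * lam < 1 := (mul_le_of_le_one_left hlam0 hβ1).trans_lt hlam1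
  refine ⟨⟨hr0, hr1⟩, fun M hM a ha p hp n => ?_⟩
  rw [abs_mul, abs_of_nonneg hβ0]
  exact mul_le_mul_of_nonneg_left (abs_le_of_affine_recursion hr0 hr1 hM ha hp n) hβ0
end

section
/- Let ρ > 0, c > 0 and Δt > 0. Every real sequence (η_n)_{n≥0} satisfying (ρ + Δt²c)·η_{n+1} − 2ρ·η_n + ρ·η_{n−1} = 0 for all n ≥ 1 converges to 0. In particular, the implicit marching scheme for the structure equation is unconditionally stable: no restriction relating Δt, ρ and c is needed. -/
open Filter

/-- The quadratic form `a·y² − 2b·y·x + b·x²`, evaluated at consecutive terms, decays geometrically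
along solutions of `a·x_{n+2} − 2b·x_{n+1} + b·x_n = 0`. -/
lemma quadratic_energy_eq_geometric {a b : ℝ} (ha : a ≠ 0) {x : ℕ → ℝ}
    (hx : ∀ n, a * x (n + 2) - 2 * b * x (n + 1) + b * x n = 0) (n : ℕ) :
    a * x (n + 1) ^ 2 - 2 * b * x (n + 1) * x n + b * x n ^ 2 =
      (b / a) ^ n * (a * x 1 ^ 2 - 2 * b * x 1 * x 0 + b * x 0 ^ 2) := by
  induction n with
  | zero => simp
  | succ n ih =>
    rw [pow_succ' (b / a), mul_assoc (b / a), ← ih, div_mul_eq_mul_div, eq_div_iff ha]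
    linear_combination (a * x (n + 2) - b * x n) * hx n

/-- Solutions of `a·x_{n+2} − 2b·x_{n+1} + b·x_n = 0` with `0 < b < a` tend to zero. -/
lemma tendsto_zero_of_linear_recurrence {a b : ℝ} (hb : 0 < b) (hab : b < a) {x : ℕ → ℝ}
    (hx : ∀ n, a * x (n + 2) - 2 * b * x (n + 1) + b * x n = 0) :
    Tendsto x atTop (nhds 0) := by
  have ha : 0 < a := hb.trans hab
  have hd : 0 < b * (a - b) := mul_pos hb (sub_pos.2 hab)
  set E := a * x 1 ^ 2 - 2 * b * x 1 * x 0 + b * x 0 ^ 2 with hE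
  have hle : ∀ n, x n ^ 2 ≤ (b / a) ^ n * (a * E / (b * (a - b))) := fun n => by
    have h := quadratic_energy_eq_geometric ha.ne' hx n
    rw [← hE] at h
    rw [← mul_div_assoc, le_div_iff₀ hd, mul_left_comm _ a, ← h]
    linarith [sq_nonneg (a * x (n + 1) - b * x n)]
  have hgeom : Tendsto (fun n : ℕ => (b / a) ^ n * (a * E / (b * (a - b)))) atTop (nhds 0) := by
    simpa using (tendsto_pow_atTop_nhds_zero_of_lt_one (div_pos hb ha).le
      ((div_lt_one ha).2 hab)).mul_const (a * E / (b * (a - b)))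
  have hsq : Tendsto (fun n => x n ^ 2) atTop (nhds 0) :=
    squeeze_zero (fun n => sq_nonneg (x n)) hle hgeom
  rw [tendsto_zero_iff_abs_tendsto_zero]
  simpa [Real.sqrt_sq_eq_abs, Function.comp_def] using hsq.sqrt

/-- Unconditional stability of the homogeneous implicit
marching scheme for the structure equation: every real sequence satisfying
`(ρ + Δt²c)·η_{n+1} − 2ρ·η_n + ρ·η_{n−1} = 0` for all `n ≥ 1` converges
to `0`, with no restriction relating `Δt`, `ρ` and `c`. -/
theorem implicit_scheme_unconditionally_stable
    (ρ c Δt : ℝ) (hρ : 0 < ρ) (hc : 0 < c) (hΔt : 0 < Δt)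
    (η : ℕ → ℝ)
    (hrec : ∀ n : ℕ, 1 ≤ n →
      (ρ + Δt ^ 2 * c) * η (n + 1) - 2 * ρ * η n + ρ * η (n - 1) = 0) :
    Tendsto η atTop (nhds 0) :=
  tendsto_zero_of_linear_recurrence hρ (lt_add_of_pos_right ρ (by positivity))
    fun n => hrec (n + 1) (Nat.le_add_left 1 n)
end

section
/- Let ρ > 0, c > 0, Δt > 0 and M ≥ 0, and let (f_n)_{n≥1} be a real sequence with |f_n| ≤ M for all n. Then every real sequence (η_n)_{n≥0} satisfying ρ·(η_{n+1} − 2η_n + η_{n−1})/Δt² + c·η_{n+1} = f_{n+1} for all n ≥ 1 is bounded; i.e., there exists K (depending on ρ, c, Δt, M, η_0, η_1) with |η_n| ≤ K for all n. -/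
/-- A complex sequence which is a bounded perturbation of a strict contraction `z ↦ l * z`
is bounded. -/
theorem exists_norm_le_of_norm_sub_mul_le {l : ℂ} (hl : ‖l‖ < 1) {u : ℕ → ℂ} {B : ℝ}
    (h : ∀ n, ‖u (n + 1) - l * u n‖ ≤ B) : ∃ K : ℝ, ∀ n, ‖u n‖ ≤ K := by
  have h1 : 0 < 1 - ‖l‖ := sub_pos.2 hl
  refine ⟨max ‖u 0‖ (B / (1 - ‖l‖)), fun n => ?_⟩
  induction n with
  | zero => exact le_max_left _ _
  | succ n ih =>
    set K := max ‖u 0‖ (B / (1 - ‖l‖))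
    have hB : B ≤ K * (1 - ‖l‖) := (div_le_iff₀ h1).1 (le_max_right _ _)
    calc ‖u (n + 1)‖ = ‖(u (n + 1) - l * u n) + l * u n‖ := by rw [sub_add_cancel]
      _ ≤ ‖u (n + 1) - l * u n‖ + ‖l‖ * ‖u n‖ := (norm_add_le _ _).trans_eq (by rw [norm_mul])
      _ ≤ B + ‖l‖ * K := by gcongr; exact h n
      _ ≤ K := by linarith

/-- A second-order linear recurrence with bounded forcing whose characteristic roots lie in the
open unit disc has only bounded solutions. -/
theorem exists_norm_le_of_second_order {l m : ℂ} (hl : ‖l‖ < 1) (hm : ‖m‖ < 1) {u : ℕ → ℂ} {B : ℝ}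
    (h : ∀ n, ‖u (n + 2) - (l + m) * u (n + 1) + l * m * u n‖ ≤ B) :
    ∃ K : ℝ, ∀ n, ‖u n‖ ≤ K := by
  obtain ⟨C, hC⟩ := exists_norm_le_of_norm_sub_mul_le (u := fun n => u (n + 1) - l * u n) hm
    (B := B) fun n => by
      convert h n using 2
      ring
  exact exists_norm_le_of_norm_sub_mul_le hl hC

/-- The roots of `(1 + a) z ^ 2 - 2 z + 1`, with `a > 0`, lie in the open unit disc. -/
theorem norm_lt_one_of_sq_eq {a t : ℝ} (ha : 0 < a) (ht : t ^ 2 = a) :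
    ‖(⟨1 / (1 + a), t / (1 + a)⟩ : ℂ)‖ < 1 := by
  rw [← sq_lt_one_iff₀ (norm_nonneg _), Complex.sq_norm, Complex.normSq_mk]
  have h : 1 / (1 + a) * (1 / (1 + a)) + t / (1 + a) * (t / (1 + a)) = 1 / (1 + a) := by
    field_simp
    rw [ht]
  rw [h, div_lt_one (by positivity)]
  linarith

/-- Unconditional stability of the implicit marching scheme
for the structure sub-problem with uniformly bounded forcing: every real
sequence satisfying
`ρ·(η_{n+1} − 2η_n + η_{n−1})/Δt² + c·η_{n+1} = f_{n+1}` for all `n ≥ 1`,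
with `|f_n| ≤ M`, is bounded. -/
theorem implicit_scheme_bounded_forcing_stable
    (ρ c Δt M : ℝ) (hρ : 0 < ρ) (hc : 0 < c) (hΔt : 0 < Δt) (hM : 0 ≤ M)
    (f : ℕ → ℝ) (hf : ∀ n : ℕ, 1 ≤ n → |f n| ≤ M)
    (η : ℕ → ℝ)
    (hrec : ∀ n : ℕ, 1 ≤ n →
      ρ * (η (n + 1) - 2 * η n + η (n - 1)) / Δt ^ 2 + c * η (n + 1) = f (n + 1)) :
    ∃ K : ℝ, ∀ n : ℕ, |η n| ≤ K := by
  set a : ℝ := c * Δt ^ 2 / ρ with ha_def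
  have ha : 0 < a := by positivity
  have hs : √a ^ 2 = a := Real.sq_sqrt ha.le
  have hl := norm_lt_one_of_sq_eq ha hs
  have hm := norm_lt_one_of_sq_eq (t := -√a) ha (by rw [neg_sq, hs])
  have hsum : (⟨1 / (1 + a), √a / (1 + a)⟩ + ⟨1 / (1 + a), -√a / (1 + a)⟩ : ℂ)
      = ((2 / (1 + a) : ℝ) : ℂ) := by
    apply Complex.ext <;>
      simp only [Complex.add_re, Complex.add_im, Complex.ofReal_re, Complex.ofReal_im] <;> ring
  have hprod : (⟨1 / (1 + a), √a / (1 + a)⟩ * ⟨1 / (1 + a), -√a / (1 + a)⟩ : ℂ)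
      = ((1 / (1 + a) : ℝ) : ℂ) := by
    apply Complex.ext
    · simp only [Complex.mul_re, Complex.ofReal_re]
      field_simp
      rw [hs]
      ring
    · simp only [Complex.mul_im, Complex.ofReal_im]
      ring
  obtain ⟨K, hK⟩ := exists_norm_le_of_second_order hl hm (u := fun n => (η n : ℂ))
    (B := Δt ^ 2 / (ρ * (1 + a)) * M) fun n => by
      have hr : η (n + 2) - 2 / (1 + a) * η (n + 1) + 1 / (1 + a) * η n
          = Δt ^ 2 / (ρ * (1 + a)) * f (n + 2) := by
        have h := hrec (n + 1) (by omega)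
        rw [Nat.add_sub_cancel] at h
        have hca : c = a * ρ / Δt ^ 2 := by rw [ha_def]; field_simp
        rw [← h, hca]
        field_simp
        ring
      rw [hsum, hprod]
      norm_cast
      rw [hr, Real.norm_eq_abs, abs_mul,
        abs_of_pos (show 0 < Δt ^ 2 / (ρ * (1 + a)) by positivity)]
      gcongr
      exact hf _ (by omega)
  exact ⟨K, fun n => by simpa using hK n⟩
end
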